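/- For any sequence c : ℕ → ℝ (with indexing starting at 1), all terms of the series Σ_{n≥1} c(n)·n^{−1/2}·f̂(log(n)/(2π)) with n ≠ 1, 2 vanish, the series converges absolutely, and its sum equals c(1) + c(2)·(1 − log 2)/√2. -/

import Mathlib

open MeasureTheory

/-- The test function `f(x) = (1/(2π))·sin²(x/2)/(x/2)²` for `x ≠ 0`, with `f(0) = 1/(2π)`. -/
noncomputable def f (x : ℝ) : ℝ :=
  if x = 0 then 1 / (2 * Real.pi)
  else (1 / (2 * Real.pi)) * Real.sin (x / 2) ^ 2 / (x / 2) ^ 2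

/-- The Fourier transform `f̂(ξ) = ∫_ℝ f(u)·e^{−2πiuξ} du`. -/
noncomputable def fhat (ξ : ℝ) : ℂ :=
  ∫ u : ℝ, (f u : ℂ) * Complex.exp (-(2 * Real.pi * Complex.I * u * ξ))

/-- The `n`-th term `c(n)·n^{−1/2}·f̂(log n/(2π))` of the sum over primes in the
explicit formula, for the test function `f`. -/
noncomputable def term (c : ℕ → ℝ) (n : ℕ) : ℂ :=
  ((c n / Real.sqrt n : ℝ) : ℂ) * fhat (Real.log n / (2 * Real.pi))

/-!
The convolution square of the indicator function of `[-a/2, a/2]` is the triangle function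
`x ↦ max 0 (a - |x|)`, whose Fourier transform is therefore `ξ ↦ a² sinc²(πaξ)`. Fourier inversion
reverses this, and `a = 1/(2π)` gives `f̂(ξ) = max 0 (1 - |2πξ|)`. At `ξ = log n / (2π)` this is
`max 0 (1 - log n)`, which vanishes for `n ≥ 3 > e` and is `1` and `1 - log 2` for `n = 1, 2`.
-/

section

open Real FourierTransform Convolution

lemma one_add_sq_mul_sinc_sq_le (x : ℝ) : (1 + x ^ 2) * sinc x ^ 2 ≤ 2 := by
  have mul_sinc : x * sinc x = sin x := by
    rcases eq_or_ne x 0 with rfl | hx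
    · simp
    · rw [sinc_of_ne_zero hx, mul_div_cancel₀ _ hx]
  calc (1 + x ^ 2) * sinc x ^ 2 = sinc x ^ 2 + sin x ^ 2 := by rw [← mul_sinc]; ring
    _ ≤ 1 + 1 := add_le_add ((sq_le_one_iff_abs_le_one _).2 (abs_sinc_le_one x)) (sin_sq_le_one x)
    _ = 2 := one_add_one_eq_two

lemma integrable_sinc_sq : Integrable fun x ↦ sinc x ^ 2 := by
  refine (integrable_inv_one_add_sq.const_mul 2).mono' (by fun_prop) (.of_forall fun x ↦ ?_)
  rw [norm_of_nonneg (sq_nonneg _), ← div_eq_mul_inv, le_div_iff₀' (by positivity)]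
  exact one_add_sq_mul_sinc_sq_le x

/-- The triangle function of height and half-width `a`. It is the convolution square of
`box (a / 2)`, and vanishes identically for `a ≤ 0`. -/
def tent (a x : ℝ) : ℝ := max 0 (a - |x|)

lemma continuous_tent (a : ℝ) : Continuous (tent a) := by unfold tent; fun_prop

lemma tent_of_le_abs {a x : ℝ} (h : a ≤ |x|) : tent a x = 0 := max_eq_left (sub_nonpos.2 h)

lemma tent_of_abs_le {a x : ℝ} (h : |x| ≤ a) : tent a x = a - |x| := max_eq_right (sub_nonneg.2 h)

lemma tent_neg (a x : ℝ) : tent a (-x) = tent a x := by simp [tent]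

lemma mul_tent {k : ℝ} (hk : 0 ≤ k) (a x : ℝ) : k * tent a x = tent (k * a) (k * x) := by
  simp [tent, mul_max_of_nonneg, hk, mul_sub, abs_mul, abs_of_nonneg]

/-- The indicator function of the interval `[-r, r]`, complex-valued so that its Fourier transform
and its convolution square can be taken directly. -/
noncomputable def box (r : ℝ) : ℝ → ℂ := (Set.Icc (-r) r).indicator 1

lemma integrable_box (r : ℝ) : Integrable (box r) :=
  (integrable_indicator_iff measurableSet_Icc).2 (integrableOn_const (by simp) (by simp))

lemma fourier_box {r : ℝ} (hr : 0 ≤ r) (ξ : ℝ) :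
    𝓕 (box r) ξ = 2 * r * sinc (2 * π * r * ξ) := by
  have fourier_eq : 𝓕 (box r) ξ = ∫ x in (-r)..r, Complex.exp (↑(-2 * π * ξ * x) * Complex.I) := by
    rw [fourier_real_eq_integral_exp_smul, intervalIntegral.integral_of_le (by linarith),
      ← integral_Icc_eq_integral_Ioc, ← integral_indicator measurableSet_Icc]
    congr with x
    simp [box, Set.indicator_apply, mul_right_comm]
  rcases eq_or_ne ξ 0 with rfl | hξ
  · simp [fourier_eq, two_mul]
  have scale_ne_zero : -2 * π * ξ ≠ 0 := by simp [pi_ne_zero, hξ]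
  have rescaled := intervalIntegral.smul_integral_comp_mul_left (a := -r) (b := r)
    (fun t : ℝ ↦ Complex.exp (t * Complex.I)) (-2 * π * ξ)
  rw [mul_neg, integral_exp_mul_I_eq_sinc, ← fourier_eq, Complex.real_smul] at rescaled
  apply mul_left_cancel₀ (Complex.ofReal_ne_zero.2 scale_ne_zero)
  rw [rescaled, show -2 * π * ξ * r = -(2 * π * r * ξ) by ring, sinc_neg]
  push_cast
  ring

lemma box_convolution_box (r : ℝ) :
    box r ⋆[ContinuousLinearMap.mul ℂ ℂ] box r = fun x ↦ (tent (2 * r) x : ℂ) := by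
  ext x
  have overlap (t : ℝ) : box r t * box r (x - t) =
      (Set.Icc (max (-r) (x - r)) (min r (x + r))).indicator (fun _ ↦ 1) t := by
    have mem_translate : x - t ∈ Set.Icc (-r) r ↔ t ∈ Set.Icc (x - r) (x + r) := by
      grind
    have box_translate : box r (x - t) = (Set.Icc (x - r) (x + r)).indicator 1 t := by
      simp only [box, Set.indicator_apply, mem_translate, Pi.one_apply]
    rw [← Set.Icc_inter_Icc, box_translate, box, ← Pi.mul_apply, ← Set.inter_indicator_one]
    rfl
  have length_overlap : min r (x + r) - max (-r) (x - r) = 2 * r - |x| := by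
    grind
  simp_rw [convolution_def, ContinuousLinearMap.mul_apply', overlap]
  rw [integral_indicator_const _ measurableSet_Icc, Real.volume_real_Icc, length_overlap,
    Complex.real_smul, mul_one, max_comm, tent]

lemma integrable_tent (a : ℝ) : Integrable fun x ↦ (tent a x : ℂ) := by
  have integrable_square := (integrable_box (a / 2)).integrable_convolution
    (ContinuousLinearMap.mul ℂ ℂ) (integrable_box (a / 2))
  rwa [box_convolution_box, mul_div_cancel₀ _ two_ne_zero] at integrable_square

lemma fourier_tent {a : ℝ} (ha : 0 ≤ a) (ξ : ℝ) :
    𝓕 (fun x ↦ (tent a x : ℂ)) ξ = ((a ^ 2 * sinc (π * a * ξ) ^ 2 : ℝ) : ℂ) := by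
  have fourier_square :=
    fourier_mul_convolution_eq (integrable_box (a / 2)) (integrable_box (a / 2)) ξ
  rw [box_convolution_box, mul_div_cancel₀ _ two_ne_zero, fourier_box (by positivity),
    show 2 * π * (a / 2) * ξ = π * a * ξ by ring] at fourier_square
  rw [fourier_square]
  push_cast
  ring

lemma fourier_sq_mul_sinc_sq {a : ℝ} (ha : 0 < a) (x : ℝ) :
    𝓕 (fun ξ ↦ ((a ^ 2 * sinc (π * a * ξ) ^ 2 : ℝ) : ℂ)) x = tent a x := by
  have fourier_eq := funext (fourier_tent ha.le)
  have integrable_fourier : Integrable (𝓕 fun x ↦ (tent a x : ℂ)) := by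
    rw [fourier_eq]
    exact ((integrable_sinc_sq.comp_mul_left' (by positivity)).const_mul _).ofReal
  have inversion := (Complex.continuous_ofReal.comp (continuous_tent a)).fourierInv_fourier_eq
    (integrable_tent a) integrable_fourier
  calc _ = 𝓕⁻ (𝓕 fun x ↦ (tent a x : ℂ)) (-x) := by
        rw [fourierInv_eq_fourier_neg, neg_neg, fourier_eq]
    _ = tent a (-x) := congrFun inversion (-x)
    _ = tent a x := by rw [tent_neg]

lemma f_eq_sinc_sq (x : ℝ) : f x = 1 / (2 * π) * sinc (x / 2) ^ 2 := by
  rcases eq_or_ne x 0 with rfl | hx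
  · simp [f]
  · rw [f, if_neg hx, mul_div_assoc, ← div_pow, sinc_of_ne_zero (by positivity)]

lemma fhat_eq_tent (ξ : ℝ) : fhat ξ = tent 1 (2 * π * ξ) := by
  set a : ℝ := (2 * π)⁻¹ with a_def
  have a_pos : 0 < a := inv_pos.2 two_pi_pos
  have two_pi_mul_a : 2 * π * a = 1 := mul_inv_cancel₀ two_pi_pos.ne'
  have f_eq (u : ℝ) : f u = 2 * π * (a ^ 2 * sinc (π * a * u) ^ 2) := by
    rw [f_eq_sinc_sq, show π * a * u = u / 2 by linear_combination u / 2 * two_pi_mul_a,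
      one_div, ← a_def]
    linear_combination -a * sinc (u / 2) ^ 2 * two_pi_mul_a
  calc fhat ξ
      = ((2 * π : ℝ) : ℂ) * 𝓕 (fun u ↦ ((a ^ 2 * sinc (π * a * u) ^ 2 : ℝ) : ℂ)) ξ := by
        rw [fhat, fourier_real_eq_integral_exp_smul, ← integral_const_mul]
        congr with u
        rw [f_eq, smul_eq_mul]
        push_cast
        ring_nf
    _ = ((2 * π * tent a ξ : ℝ) : ℂ) := by
        rw [fourier_sq_mul_sinc_sq a_pos, Complex.ofReal_mul (2 * π)]
    _ = tent 1 (2 * π * ξ) := by rw [mul_tent two_pi_pos.le, two_pi_mul_a]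

lemma term_eq_tent (c : ℕ → ℝ) (n : ℕ) :
    term c n = ((c n / sqrt n * tent 1 (log n) : ℝ) : ℂ) := by
  rw [term, fhat_eq_tent, mul_div_cancel₀ _ two_pi_pos.ne', Complex.ofReal_mul]

lemma term_one (c : ℕ → ℝ) : term c 1 = (c 1 : ℂ) := by
  simp [term_eq_tent, tent]

lemma term_two (c : ℕ → ℝ) :
    term c 2 = ((c 2 * (1 - log 2) / sqrt 2 : ℝ) : ℂ) := by
  have abs_log_two : |log 2| = log 2 := abs_of_pos (log_pos one_lt_two)
  have abs_log_two_le : |log 2| ≤ 1 := by linarith [log_two_lt_d9]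
  rw [term_eq_tent, Nat.cast_ofNat, tent_of_abs_le abs_log_two_le, abs_log_two, div_mul_eq_mul_div]

lemma term_eq_zero_of_three_le (c : ℕ → ℝ) {n : ℕ} (hn : 3 ≤ n) : term c n = 0 := by
  have three_le : (3 : ℝ) ≤ n := by exact_mod_cast hn
  have one_le_log : 1 ≤ log n := by
    rw [le_log_iff_exp_le (by positivity)]
    exact exp_one_lt_three.le.trans three_le
  rw [term_eq_tent, tent_of_le_abs (one_le_log.trans (le_abs_self _)), mul_zero,
    Complex.ofReal_zero]

end

theorem explicit_formula_sum (c : ℕ → ℝ) :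
    (∀ n : ℕ, 1 ≤ n → n ≠ 1 → n ≠ 2 → term c n = 0) ∧
    Summable (fun n : ℕ => ‖term c (n + 1)‖) ∧
    ∑' n : ℕ, term c (n + 1) =
      ((c 1 + c 2 * (1 - Real.log 2) / Real.sqrt 2 : ℝ) : ℂ) := by
  have term_eq_zero : ∀ n ∉ Finset.range 2, term c (n + 1) = 0 := fun n hn ↦
    term_eq_zero_of_three_le c (by rw [Finset.mem_range] at hn; lia)
  refine ⟨fun n _ _ _ ↦ term_eq_zero_of_three_le c (by lia), ?_, ?_⟩
  · exact summable_of_ne_finset_zero fun n hn ↦ by rw [term_eq_zero n hn, norm_zero]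
  · rw [tsum_eq_sum term_eq_zero, Finset.sum_range_succ, Finset.sum_range_one, term_one, term_two,
      Complex.ofReal_add]
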